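/- arXiv:1506.07947 — 2 statements merged into one kernel-verified Lean document; each statement's English description precedes it below -/
import Mathlib

section
/- (Partition for bundled sampling.) For all positive integers k₁, k₂, setting k̃ = min{k₁,k₂}, there exists a partition (𝒯₁,…,𝒯_N) of ([k₁]×[k₂]) × ([k₁]×[k₂]) into N ≤ 2k₁²k₂²/k̃ disjoint subsets with ∪_{ℓ∈[N]} 𝒯_ℓ = ([k₁]×[k₂])², such that each 𝒯_ℓ has cardinality at most k̃, and within each 𝒯_ℓ any two distinct elements ((a,b),(a',b')) and ((c,d),(c',d')) satisfy {a,a'} ∩ {c,c'} = ∅ and {b,b'} ∩ {d,d'} = ∅. -/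
open scoped BigOperators

/-!
Assume `k ≤ n`. It suffices to colour `(Fin k × Fin n)²` with `2 k n²` colours so that distinct
elements of equal colour share no first-coordinate and no second-coordinate index; the bound on the
size of a class is then automatic, because `x ↦ x.1.1` and `x ↦ x.1.2` are injective on it.

Regard `x` as a pair `u = (a, a')` over `Fin k` and a pair `v = (b, b')` over `Fin n`.
The pairs over `Fin k` are grouped by `a + a' mod k`, and each group is split by a sign into two
matchings of size `⌊k/2⌋`; for odd `k` one diagonal pair is left over, which gets sign `0` and
is compatible with both matchings. Positions `p` number the pairs inside a matching, the leftover
pair having the last position `⌊k/2⌋` (`exists_labelling`).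

To colour `(u, v)`, record both residues, both signs, and `p u + p v` modulo the matching size
over `Fin n`, i.e. split each product of matchings into its cyclic transversals. A zero sign
is replaced by the other sign (by `+` if both vanish). So leftover pairs only enter blocks with equal
signs, where the modulus is `⌈n/2⌉`, and never blocks with opposite signs, where the modulus is
`⌊n/2⌋`. Each pair of residues thus uses `2⌈n/2⌉ + 2⌊n/2⌋ = 2n` colours, for a total of `2 k n²`.
-/

set_option maxHeartbeats 1000000 in
/-- Labels on pairs over `Fin k`: a residue `s`, a sign `e ∈ {-1, 0, 1}` and a position `p`.
Distinct pairs with equal residue and non-opposite signs have disjoint entries and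
different positions; only pairs of sign `0` may use the position `k / 2`. -/
lemma exists_labelling (k : ℕ) :
    ∃ (s : Fin k × Fin k → Fin k) (e : Fin k × Fin k → ℤ) (p : Fin k × Fin k → ℕ),
      (∀ x, e x = -1 ∨ e x = 0 ∨ e x = 1) ∧
      (∀ x, p x < (k + 1) / 2) ∧
      (∀ x, e x ≠ 0 → p x < k / 2) ∧
      (∀ x y, x ≠ y → s x = s y → (e x = e y ∨ e x = 0 ∨ e y = 0) →
        p x ≠ p y ∧ Disjoint ({x.1, x.2} : Finset (Fin k)) {y.1, y.2}) := by
  -- For even `k` the two diagonal pairs of an even residue receive opposite signs, and the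
  -- position of a pair is its minimum if there is no carry in `a + a'`; the pairs with a carry
  -- are numbered by their maximum, downwards from `k / 2 - 1`.
  refine ⟨fun x => ⟨if x.1.1 + x.2.1 < k then x.1.1 + x.2.1 else x.1.1 + x.2.1 - k, by
      split_ifs <;> omega⟩,
    fun x => if x.1.1 < x.2.1 then 1 else if x.2.1 < x.1.1 then -1 else
      if k % 2 = 1 then 0 else if x.1.1 < k / 2 then 1 else -1,
    fun x => if x.1.1 = x.2.1 ∧ k % 2 = 1 then k / 2 else
      if x.1.1 + x.2.1 < k then min x.1.1 x.2.1 else max x.1.1 x.2.1 + k / 2 - k, ?_, ?_, ?_, ?_⟩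
  · intro x
    dsimp only
    split_ifs <;> simp
  · rintro ⟨⟨a, ha⟩, ⟨b, hb⟩⟩
    dsimp only
    split_ifs <;> omega
  · rintro ⟨⟨a, ha⟩, ⟨b, hb⟩⟩
    dsimp only
    intro h
    split_ifs at h ⊢ <;> omega
  · rintro ⟨⟨a, ha⟩, ⟨b, hb⟩⟩ ⟨⟨c, hc⟩, ⟨d, hd⟩⟩ hne hs he
    simp only [ne_eq, Prod.mk.injEq, Fin.mk.injEq] at hne hs he
    simp only [Finset.disjoint_insert_left, Finset.disjoint_singleton_left, Finset.mem_insert,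
      Finset.mem_singleton, Fin.mk.injEq]
    constructor
    · split_ifs at hs <;> split_ifs at he <;>
        first | (simp at he; done) | omega | (split_ifs <;> omega)
    · split_ifs at hs <;> split_ifs at he <;>
        first | (simp at he; done) | omega

lemma eq_of_add_mod_eq {M p q q' : ℕ} (hq : q < M) (hr : q' < M)
    (h : (p + q) % M = (p + q') % M) : q = q' :=
  (Nat.ModEq.add_left_cancel' p h).eq_of_lt_of_lt hq hr

/-- The sign used for a pair of sign `e` next to a pair of sign `e'`: a vanishing sign is replaced
by the other one, and by `+` if both vanish. `true` stands for `+`. -/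
def resolveSign (e e' : ℤ) : Bool :=
  if e = 0 then decide (0 ≤ e') else decide (0 < e)

/-- Pairs with the same resolved sign do not have opposite signs. -/
lemma not_opposite {e e' f f' : ℤ} (he : e = -1 ∨ e = 0 ∨ e = 1) (hf : f = -1 ∨ f = 0 ∨ f = 1)
    (h : resolveSign e e' = resolveSign f f') : e = f ∨ e = 0 ∨ f = 0 := by
  rcases he with rfl | rfl | rfl <;> rcases hf with rfl | rfl | rfl <;>
    simp [resolveSign] at h ⊢

lemma ne_zero_of_resolveSign_ne {e e' : ℤ} (he : e = -1 ∨ e = 0 ∨ e = 1)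
    (he' : e' = -1 ∨ e' = 0 ∨ e' = 1) (h : resolveSign e e' ≠ resolveSign e' e) :
    e ≠ 0 ∧ e' ≠ 0 := by
  rcases he with rfl | rfl | rfl <;> rcases he' with rfl | rfl | rfl <;>
    simp [resolveSign] at h ⊢

/-- The colouring with `2 k n²` colours for `k ≤ n`. The last component of a colour encodes both
whether the resolved signs agree and the transversal inside the block. -/
lemma exists_colouring (k n : ℕ) (hkn : k ≤ n) :
    ∃ f : (Fin k × Fin k) × (Fin n × Fin n) → Fin k × Fin n × Bool × Fin n,
      ∀ x y, x ≠ y → f x = f y →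
        Disjoint ({x.1.1, x.1.2} : Finset (Fin k)) {y.1.1, y.1.2} ∧
        Disjoint ({x.2.1, x.2.2} : Finset (Fin n)) {y.2.1, y.2.2} := by
  obtain ⟨s, e, p, he, hp, hp', H⟩ := exists_labelling k
  obtain ⟨t, g, q, hg, hq, hq', K⟩ := exists_labelling n
  let σ : (Fin k × Fin k) × (Fin n × Fin n) → Bool := fun x => resolveSign (e x.1) (g x.2)
  let τ : (Fin k × Fin k) × (Fin n × Fin n) → Bool := fun x => resolveSign (g x.2) (e x.1)
  let w : (Fin k × Fin k) × (Fin n × Fin n) → ℕ := fun x =>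
    if σ x = τ x then (p x.1 + q x.2) % ((n + 1) / 2)
    else (n + 1) / 2 + (p x.1 + q x.2) % (n / 2)
  have hlt : ∀ x, σ x ≠ τ x → p x.1 < n / 2 ∧ q x.2 < n / 2 := by
    intro x hx
    obtain ⟨h1, h2⟩ := ne_zero_of_resolveSign_ne (he x.1) (hg x.2) hx
    have := hp' x.1 h1
    have := hq' x.2 h2
    omega
  have hlt' : ∀ x : (Fin k × Fin k) × (Fin n × Fin n),
      p x.1 < (n + 1) / 2 ∧ q x.2 < (n + 1) / 2 := by
    intro x
    have := hp x.1
    have := hq x.2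
    omega
  have hw1 : ∀ x, σ x = τ x → w x = (p x.1 + q x.2) % ((n + 1) / 2) ∧ w x < (n + 1) / 2 := by
    intro x hx
    have h : w x = (p x.1 + q x.2) % ((n + 1) / 2) := if_pos hx
    have := hlt' x
    exact ⟨h, h ▸ Nat.mod_lt _ (by omega)⟩
  have hw2 : ∀ x, σ x ≠ τ x →
      w x = (n + 1) / 2 + (p x.1 + q x.2) % (n / 2) ∧ (p x.1 + q x.2) % (n / 2) < n / 2 := by
    intro x hx
    have := hlt x hx
    exact ⟨if_neg hx, Nat.mod_lt _ (by omega)⟩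
  have hw : ∀ x, w x < n := by
    intro x
    by_cases hx : σ x = τ x
    · have := hw1 x hx
      have := x.2.1.2
      omega
    · have := hw2 x hx
      omega
  refine ⟨fun x => (s x.1, t x.2, σ x, ⟨w x, hw x⟩), ?_⟩
  intro x y hxy hf
  simp only [Prod.mk.injEq, Fin.mk.injEq] at hf
  obtain ⟨hs, ht, hσ, hwe⟩ := hf
  -- Equal colours put `x` and `y` in the same block, and there the two positions
  -- determine each other.
  have key : τ x = τ y ∧ (p x.1 = p y.1 ↔ q x.2 = q y.2) := by
    have transversal : ∀ M, (p x.1 < M ∧ q x.2 < M) → (p y.1 < M ∧ q y.2 < M) →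
        (p x.1 + q x.2) % M = (p y.1 + q y.2) % M → (p x.1 = p y.1 ↔ q x.2 = q y.2) := by
      intro M h1 h2 h
      constructor
      · intro h3
        rw [h3] at h
        exact eq_of_add_mod_eq h1.2 h2.2 h
      · intro h3
        rw [h3, add_comm, add_comm (p y.1)] at h
        exact eq_of_add_mod_eq h1.1 h2.1 h
    by_cases hx : σ x = τ x <;> by_cases hy : σ y = τ y
    · refine ⟨by rw [← hx, ← hy, hσ], transversal _ (hlt' x) (hlt' y) ?_⟩
      rw [← (hw1 x hx).1, ← (hw1 y hy).1, hwe]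
    · have := hw1 x hx
      have := hw2 y hy
      omega
    · have := hw2 x hx
      have := hw1 y hy
      omega
    · refine ⟨?_, transversal _ (hlt x hx) (hlt y hy) ?_⟩
      · revert hx hy hσ
        cases σ x <;> cases σ y <;> cases τ x <;> cases τ y <;> simp
      · have := hw2 x hx
        have := hw2 y hy
        omega
  obtain ⟨hτ, hpq⟩ := key
  have h1 : x.1 ≠ y.1 → _ := fun h => H x.1 y.1 h hs (not_opposite (he _) (he _) hσ)
  have h2 : x.2 ≠ y.2 → _ := fun h => K x.2 y.2 h ht (not_opposite (hg _) (hg _) hτ)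
  have h12 : x.1 = y.1 ↔ x.2 = y.2 := by
    constructor
    · intro h
      by_contra h'
      exact (h2 h').1 (hpq.1 (by rw [h]))
    · intro h
      by_contra h'
      exact (h1 h').1 (hpq.2 (by rw [h]))
  have hne : x.1 ≠ y.1 := fun h => hxy (Prod.ext h (h12.1 h))
  exact ⟨(h1 hne).2, (h2 (fun h => hne (h12.2 h))).2⟩

/-- The colour classes of a colouring with `N` colours form the required partition. -/
lemma partition_of_colouring {k1 k2 N : ℕ} {C : Type} [Fintype C] [DecidableEq C]
    (hC : Fintype.card C = N) (f : (Fin k1 × Fin k2) × (Fin k1 × Fin k2) → C)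
    (hf : ∀ x y, x ≠ y → f x = f y →
      Disjoint ({x.1.1, x.2.1} : Finset (Fin k1)) {y.1.1, y.2.1} ∧
      Disjoint ({x.1.2, x.2.2} : Finset (Fin k2)) {y.1.2, y.2.2}) :
    ∃ T : Fin N → Finset ((Fin k1 × Fin k2) × (Fin k1 × Fin k2)),
      (∀ a b : Fin N, a ≠ b → Disjoint (T a) (T b)) ∧
      (∀ x : (Fin k1 × Fin k2) × (Fin k1 × Fin k2), ∃ a : Fin N, x ∈ T a) ∧
      (∀ a : Fin N, (T a).card ≤ min k1 k2) ∧
      (∀ a : Fin N, ∀ x ∈ T a, ∀ y ∈ T a, x ≠ y →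
        Disjoint ({x.1.1, x.2.1} : Finset (Fin k1)) ({y.1.1, y.2.1} : Finset (Fin k1)) ∧
        Disjoint ({x.1.2, x.2.2} : Finset (Fin k2)) ({y.1.2, y.2.2} : Finset (Fin k2))) := by
  let φ := Fintype.equivFinOfCardEq hC
  have hT : ∀ a : Fin N, ∀ x ∈ Finset.univ.filter (fun x => φ (f x) = a),
      ∀ y ∈ Finset.univ.filter (fun x => φ (f x) = a), x ≠ y →
        Disjoint ({x.1.1, x.2.1} : Finset (Fin k1)) ({y.1.1, y.2.1} : Finset (Fin k1)) ∧
        Disjoint ({x.1.2, x.2.2} : Finset (Fin k2)) ({y.1.2, y.2.2} : Finset (Fin k2)) := by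
    intro a x hx y hy hxy
    simp only [Finset.mem_filter, Finset.mem_univ, true_and] at hx hy
    exact hf x y hxy (φ.injective (hx.trans hy.symm))
  refine ⟨fun a => Finset.univ.filter (fun x => φ (f x) = a), ?_, ?_, ?_, hT⟩
  · intro a b hab
    rw [Finset.disjoint_left]
    intro x hx hx'
    simp only [Finset.mem_filter, Finset.mem_univ, true_and] at hx hx'
    exact hab (hx.symm.trans hx')
  · intro x
    exact ⟨φ (f x), by simp⟩
  · intro a
    refine le_min ?_ ?_
    · refine (Finset.card_le_card_of_injOn (t := Finset.univ) (fun x => x.1.1)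
        (fun _ _ => Finset.mem_coe.2 (Finset.mem_univ _)) ?_).trans (by simp)
      intro x hx y hy hxy
      by_contra hne
      have := (hT a x hx y hy hne).1
      simp_all
    · refine (Finset.card_le_card_of_injOn (t := Finset.univ) (fun x => x.1.2)
        (fun _ _ => Finset.mem_coe.2 (Finset.mem_univ _)) ?_).trans (by simp)
      intro x hx y hy hxy
      by_contra hne
      have := (hT a x hx y hy hne).2
      simp_all

/-- Lemma 10 (partition for bundled sampling): `([k₁]×[k₂])²` can be partitioned into
at most `2k₁²k₂²/min{k₁,k₂}` classes, each of cardinality at most `min{k₁,k₂}`, such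
that any two distinct elements within the same class share no first-coordinate index
and no second-coordinate index. -/
theorem bundle_index_partition (k1 k2 : ℕ) (hk1 : 0 < k1) (hk2 : 0 < k2) :
    ∃ (N : ℕ) (T : Fin N → Finset ((Fin k1 × Fin k2) × (Fin k1 × Fin k2))),
      (N : ℝ) ≤ 2 * (k1 : ℝ) ^ 2 * (k2 : ℝ) ^ 2 / min (k1 : ℝ) (k2 : ℝ) ∧
      (∀ a b : Fin N, a ≠ b → Disjoint (T a) (T b)) ∧
      (∀ x : (Fin k1 × Fin k2) × (Fin k1 × Fin k2), ∃ a : Fin N, x ∈ T a) ∧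
      (∀ a : Fin N, (T a).card ≤ min k1 k2) ∧
      (∀ a : Fin N, ∀ x ∈ T a, ∀ y ∈ T a, x ≠ y →
        Disjoint ({x.1.1, x.2.1} : Finset (Fin k1)) ({y.1.1, y.2.1} : Finset (Fin k1)) ∧
        Disjoint ({x.1.2, x.2.2} : Finset (Fin k2)) ({y.1.2, y.2.2} : Finset (Fin k2))) := by
  have h1 : (0 : ℝ) < k1 := by exact_mod_cast hk1
  have h2 : (0 : ℝ) < k2 := by exact_mod_cast hk2
  rcases le_total k1 k2 with h | h
  · obtain ⟨f, hf⟩ := exists_colouring k1 k2 h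
    obtain ⟨T, hT⟩ := partition_of_colouring (N := 2 * k1 * k2 ^ 2)
      (by simp only [Fintype.card_prod, Fintype.card_fin, Fintype.card_bool]; ring)
      (fun x => f ((x.1.1, x.2.1), (x.1.2, x.2.2)))
      (fun x y hxy hc => hf _ _ (fun h => hxy (by
        simp only [Prod.mk.injEq] at h
        ext1 <;> ext1 <;> simp [h])) hc)
    refine ⟨_, T, ?_, hT⟩
    rw [min_eq_left (by exact_mod_cast h), le_div_iff₀ h1]
    push_cast
    exact le_of_eq (by ring)
  · obtain ⟨f, hf⟩ := exists_colouring k2 k1 h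
    obtain ⟨T, hT⟩ := partition_of_colouring (N := 2 * k2 * k1 ^ 2)
      (by simp only [Fintype.card_prod, Fintype.card_fin, Fintype.card_bool]; ring)
      (fun x => f ((x.1.2, x.2.2), (x.1.1, x.2.1)))
      (fun x y hxy hc => (hf _ _ (fun h => hxy (by
        simp only [Prod.mk.injEq] at h
        ext1 <;> ext1 <;> simp [h])) hc).symm)
    refine ⟨_, T, ?_, hT⟩
    rw [min_eq_right (by exact_mod_cast h), le_div_iff₀ h2]
    push_cast
    exact le_of_eq (by ring)
end

section
/- Let ρ be a positive integer and θ ∈ ℝ^ρ with |θ_i| ≤ α for all i ∈ [ρ]. Let p ∈ ℝ^ρ be the softmax probability vector p_i = e^{θ_i}/(e^{θ_1} + ⋯ + e^{θ_ρ}). Then, in the positive semidefinite order on ρ×ρ symmetric matrices, e^{2α}·(diag(p) − p·p^T) ⪰ (1/ρ)·I − (1/ρ²)·𝟙𝟙^T, where I is the ρ×ρ identity matrix and 𝟙 ∈ ℝ^ρ is the all-ones vector. -/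
/-!
The quadratic form of `diag(p) - ppᵀ` at `x` is the variance of `x` under `p`, and that of
`ρ⁻¹ I - ρ⁻² 𝟙𝟙ᵀ` is the variance of `x` under the uniform distribution. The bound `|θᵢ| ≤ α`
gives `e^{2α} pᵢ ≥ 1/ρ` (`softmax_ge`), so with `m = ∑ pᵢ xᵢ`,
`e^{2α} Var_p(x) = e^{2α} ∑ pᵢ (xᵢ - m)² ≥ ρ⁻¹ ∑ (xᵢ - m)² ≥ Var_unif(x)`,
the last step because the mean minimises the mean squared deviation (`variance_le`).
-/

/-- Softmax weights of scores in `[-α, α]` are at least `e^{-2α}/ρ`. -/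
lemma softmax_ge {ρ : ℕ} (hρ : 0 < ρ) {α : ℝ} {θ : Fin ρ → ℝ} (hθ : ∀ i, |θ i| ≤ α)
    (i : Fin ρ) :
    (ρ : ℝ)⁻¹ ≤ Real.exp (2 * α) * (Real.exp (θ i) / ∑ j, Real.exp (θ j)) := by
  have : Nonempty (Fin ρ) := ⟨i⟩
  have hpos : 0 < ∑ j, Real.exp (θ j) :=
    Finset.sum_pos (fun j _ => Real.exp_pos _) Finset.univ_nonempty
  have hsum : ∑ j, Real.exp (θ j) ≤ ρ * Real.exp α := by
    calc ∑ j, Real.exp (θ j) ≤ ∑ _j : Fin ρ, Real.exp α :=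
          Finset.sum_le_sum fun j _ => Real.exp_le_exp.2 (abs_le.1 (hθ j)).2
      _ = ρ * Real.exp α := by simp
  have hexp : Real.exp α ≤ Real.exp (2 * α) * Real.exp (θ i) := by
    rw [← Real.exp_add]
    exact Real.exp_le_exp.2 (by linarith [(abs_le.1 (hθ i)).1])
  have hρ' : (0 : ℝ) < ρ := by exact_mod_cast hρ
  rw [← mul_div_assoc, le_div_iff₀ hpos, inv_mul_le_iff₀ hρ']
  exact hsum.trans (mul_le_mul_of_nonneg_left hexp hρ'.le)

/-- Domination of weights, `1/ρ ≤ E pᵢ`, passes to variances. -/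
lemma variance_le {ρ : ℕ} (hρ : 0 < ρ) {E : ℝ} {p : Fin ρ → ℝ} (hp1 : ∑ i, p i = 1)
    (hp : ∀ i, (ρ : ℝ)⁻¹ ≤ E * p i) (x : Fin ρ → ℝ) :
    (ρ : ℝ)⁻¹ * ∑ i, x i ^ 2 - ((ρ : ℝ) ^ 2)⁻¹ * (∑ i, x i) ^ 2 ≤
      E * (∑ i, p i * x i ^ 2 - (∑ i, p i * x i) ^ 2) := by
  have hρ' : (ρ : ℝ) ≠ 0 := by exact_mod_cast hρ.ne'
  set m := ∑ i, p i * x i with hm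
  have h1 : 0 ≤ ∑ i, (E * p i - (ρ : ℝ)⁻¹) * (x i - m) ^ 2 :=
    Finset.sum_nonneg fun i _ => mul_nonneg (sub_nonneg.2 (hp i)) (sq_nonneg _)
  have h2 : ∑ i, (E * p i - (ρ : ℝ)⁻¹) * (x i - m) ^ 2 =
      E * (∑ i, p i * x i ^ 2) - 2 * E * m * (∑ i, p i * x i) + E * m ^ 2 * (∑ i, p i)
        - (ρ : ℝ)⁻¹ * (∑ i, x i ^ 2) + 2 * (ρ : ℝ)⁻¹ * m * (∑ i, x i)
        - ∑ _i : Fin ρ, (ρ : ℝ)⁻¹ * m ^ 2 := by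
    simp only [Finset.mul_sum, ← Finset.sum_add_distrib, ← Finset.sum_sub_distrib]
    exact Finset.sum_congr rfl fun i _ => by ring
  have h3 : ∑ _i : Fin ρ, (ρ : ℝ)⁻¹ * m ^ 2 = m ^ 2 := by
    simp [hρ']
  rw [h2, h3, hp1, ← hm] at h1
  have h4 := sq_nonneg ((ρ : ℝ)⁻¹ * (∑ i, x i) - m)
  rw [← inv_pow]
  nlinarith

open scoped BigOperators Matrix

/-- Remark (Claim 1 of Hajek–Oh–Xu): for a softmax probability vector `p` built from
scores `θ` with `|θᵢ| ≤ α`, one has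
`e^{2α}(diag(p) − ppᵀ) ⪰ (1/ρ)I − (1/ρ²)𝟙𝟙ᵀ` in the positive semidefinite order. -/
theorem softmax_hessian_lower_bound
    (ρ : ℕ) (hρ : 0 < ρ) (α : ℝ) (θ : Fin ρ → ℝ)
    (hθ : ∀ i, |θ i| ≤ α)
    (p : Fin ρ → ℝ)
    (hp : ∀ i, p i = Real.exp (θ i) / ∑ j, Real.exp (θ j)) :
    (Real.exp (2 * α) • (Matrix.diagonal p - Matrix.vecMulVec p p) -
      (((ρ : ℝ)⁻¹ • (1 : Matrix (Fin ρ) (Fin ρ) ℝ)) -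
        (((ρ : ℝ) ^ 2)⁻¹ • Matrix.of (fun _ _ => (1 : ℝ))))).PosSemidef := by
  have : Nonempty (Fin ρ) := ⟨⟨0, hρ⟩⟩
  have hpos : 0 < ∑ j, Real.exp (θ j) :=
    Finset.sum_pos (fun j _ => Real.exp_pos _) Finset.univ_nonempty
  have hp1 : ∑ i, p i = 1 := by
    simp only [hp, ← Finset.sum_div]
    exact div_self hpos.ne'
  refine Matrix.PosSemidef.of_dotProduct_mulVec_nonneg ?_ fun x => ?_
  · ext i j
    simp [Matrix.diagonal_apply, Matrix.vecMulVec_apply, Matrix.one_apply, eq_comm, mul_comm]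
    by_cases h : i = j <;> simp [h]
  · have key := variance_le hρ hp1 (fun i => by rw [hp i]; exact softmax_ge hρ hθ i) x
    have hdiag : x ⬝ᵥ Matrix.diagonal p *ᵥ x = ∑ i, p i * x i ^ 2 := by
      simp only [dotProduct, Matrix.mulVec_diagonal]
      exact Finset.sum_congr rfl fun i _ => by ring
    have hpp : x ⬝ᵥ Matrix.vecMulVec p p *ᵥ x = (∑ i, p i * x i) ^ 2 := by
      rw [Matrix.vecMulVec_mulVec]
      simp [dotProduct, ← Finset.sum_mul, ← mul_assoc, sq, mul_comm]
    have hid : x ⬝ᵥ x = ∑ i, x i ^ 2 := by simp [dotProduct, sq]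
    have hones : x ⬝ᵥ Matrix.of (fun _ _ => (1 : ℝ)) *ᵥ x = (∑ i, x i) ^ 2 := by
      simp [dotProduct, Matrix.mulVec, ← Finset.sum_mul, sq]
    simp only [star_trivial, Matrix.sub_mulVec, Matrix.smul_mulVec, Matrix.one_mulVec,
      dotProduct_sub, dotProduct_smul, smul_eq_mul, hdiag, hpp, hid, hones]
    linarith
end
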